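/- Let (u₁, v₁) and (u₂, v₂) be H-continuous pairs on Ω. If there exists a dense subset D of Ω such that u₁(x) = u₂(x) and v₁(x) = v₂(x) for all x ∈ D, then u₁(x) = u₂(x) and v₁(x) = v₂(x) for all x ∈ Ω. -/

import Mathlib

open Set

/-- Points of `ℝⁿ`. -/
abbrev Pt (n : ℕ) := EuclideanSpace ℝ (Fin n)

/-- Lower Baire operator `I(D,Ω,f)(x) = sup_{δ>0} inf { f y : y ∈ B_δ(x) ∩ D }`,
where `B_δ(x) = { y ∈ Ω : ‖y - x‖ < δ }`. -/
noncomputable def Ilow {n : ℕ} (D Om : Set (Pt n)) (f : Pt n → ℝ) (x : Pt n) : ℝ :=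
  sSup {a : ℝ | ∃ δ : ℝ, 0 < δ ∧
    a = sInf (f '' {y | y ∈ Om ∧ ‖y - x‖ < δ ∧ y ∈ D})}

/-- Upper Baire operator `S(D,Ω,f)(x) = inf_{δ>0} sup { f y : y ∈ B_δ(x) ∩ D }`. -/
noncomputable def Shigh {n : ℕ} (D Om : Set (Pt n)) (f : Pt n → ℝ) (x : Pt n) : ℝ :=
  sInf {a : ℝ | ∃ δ : ℝ, 0 < δ ∧
    a = sSup (f '' {y | y ∈ Om ∧ ‖y - x‖ < δ ∧ y ∈ D})}

/-- `f`, defined on `D ⊆ Ω`, is locally bounded relative to `Ω`. -/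
def LocBddOn {n : ℕ} (Om D : Set (Pt n)) (f : Pt n → ℝ) : Prop :=
  ∀ x ∈ Om, ∃ δ : ℝ, 0 < δ ∧ ∃ M : ℝ,
    ∀ y, y ∈ Om → ‖y - x‖ < δ → y ∈ D → |f y| < M

/-- `(u, v)` encodes an interval-valued function `x ↦ [u x, v x]` on `Om`. -/
def IntervalPair {n : ℕ} (Om : Set (Pt n)) (u v : Pt n → ℝ) : Prop :=
  LocBddOn Om Om u ∧ LocBddOn Om Om v ∧ ∀ x ∈ Om, u x ≤ v x

/-- The pair `(u, v)` is S-continuous on `Om`: `I(u) = u` and `S(v) = v`. -/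
def SCont {n : ℕ} (Om : Set (Pt n)) (u v : Pt n → ℝ) : Prop :=
  ∀ x ∈ Om, Ilow Om Om u x = u x ∧ Shigh Om Om v x = v x

/-- The pair `(u, v)` is Hausdorff continuous on `Om`. -/
def HCont {n : ℕ} (Om : Set (Pt n)) (u v : Pt n → ℝ) : Prop :=
  ∀ p q : Pt n → ℝ, LocBddOn Om Om p → LocBddOn Om Om q →
    (∀ x ∈ Om, u x ≤ p x ∧ p x ≤ q x ∧ q x ≤ v x) →
    ∀ x ∈ Om, Ilow Om Om p x = u x ∧ Shigh Om Om q x = v x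

/-- `(u, v)` is an H-continuous interval pair on `Om`. -/
def HContPair {n : ℕ} (Om : Set (Pt n)) (u v : Pt n → ℝ) : Prop :=
  IntervalPair Om u v ∧ HCont Om u v

/-- Lower endpoint of the pointwise interval product. -/
noncomputable def imin {n : ℕ} (u₁ v₁ u₂ v₂ : Pt n → ℝ) (x : Pt n) : ℝ :=
  min (min (u₁ x * u₂ x) (u₁ x * v₂ x)) (min (v₁ x * u₂ x) (v₁ x * v₂ x))

/-- Upper endpoint of the pointwise interval product. -/
noncomputable def imax {n : ℕ} (u₁ v₁ u₂ v₂ : Pt n → ℝ) (x : Pt n) : ℝ :=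
  max (max (u₁ x * u₂ x) (u₁ x * v₂ x)) (max (v₁ x * u₂ x) (v₁ x * v₂ x))

/-- `(pl, pu)` is the H-continuous pair contained pointwise in the interval sum of
`(u₁, v₁)` and `(u₂, v₂)`, i.e. `(pl, pu) = (u₁,v₁) ⊕ (u₂,v₂)`. -/
def IsOplus {n : ℕ} (Om : Set (Pt n)) (u₁ v₁ u₂ v₂ pl pu : Pt n → ℝ) : Prop :=
  HContPair Om pl pu ∧
    ∀ x ∈ Om, u₁ x + u₂ x ≤ pl x ∧ pl x ≤ pu x ∧ pu x ≤ v₁ x + v₂ x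

/-- `(ql, qu)` is the H-continuous pair contained pointwise in the interval product of
`(u₁, v₁)` and `(u₂, v₂)`, i.e. `(ql, qu) = (u₁,v₁) ⊗ (u₂,v₂)`. -/
def IsOtimes {n : ℕ} (Om : Set (Pt n)) (u₁ v₁ u₂ v₂ ql qu : Pt n → ℝ) : Prop :=
  HContPair Om ql qu ∧
    ∀ x ∈ Om, imin u₁ v₁ u₂ v₂ x ≤ ql x ∧ ql x ≤ qu x ∧ qu x ≤ imax u₁ v₁ u₂ v₂ x

/-!
Lower endpoints are lower semicontinuous and upper endpoints upper semicontinuous, so the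
inequalities `u₁ ≤ v₂` and `u₂ ≤ v₁` pass from `D` to all of `Ω`: the two intervals meet at every
point. The pair `(max u₁ u₂, min v₁ v₂)` then lies inside both `(u₁, v₁)` and `(u₂, v₂)`, and
H-continuity recovers each of them from it by the Baire operators.
-/

theorem le_of_lowerSemicontinuousOn_of_upperSemicontinuousOn {X γ : Type*}
    [TopologicalSpace X] [LinearOrder γ] {s t : Set X} {f g : X → γ}
    (hf : LowerSemicontinuousOn f s) (hg : UpperSemicontinuousOn g s)
    (hts : t ⊆ s) (hst : s ⊆ closure t) (hfg : ∀ x ∈ t, f x ≤ g x) : ∀ x ∈ s, f x ≤ g x := by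
  intro x hx
  by_contra! hlt
  obtain ⟨a, hga, b, hbf, hab⟩ := hlt.exists_disjoint_Iio_Ioi
  have := mem_closure_iff_nhdsWithin_neBot.1 (hst hx)
  have hlt_near : ∀ᶠ y in nhdsWithin x t, g y < f y := by
    filter_upwards [((hf x hx).mono hts) b hbf, ((hg x hx).mono hts) a hga]
      with y hby hya using hab _ hya _ hby
  obtain ⟨y, hy, hyt⟩ := (hlt_near.and self_mem_nhdsWithin).exists
  exact hy.not_ge (hfg y hyt)

section Baire

variable {n : ℕ} {D Om : Set (Pt n)} {f : Pt n → ℝ}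

theorem Ilow_neg (x : Pt n) : Ilow D Om (-f) x = -Shigh D Om f x := by
  have sInf_image_neg (t : Set (Pt n)) : sInf ((-f) '' t) = -sSup (f '' t) := by
    rw [← Real.sInf_neg, ← image_neg_eq_neg, image_image]
    rfl
  simp only [Ilow, Shigh, sInf_image_neg, ← Real.sSup_neg]
  congr 1
  ext a
  simp only [mem_ofPred_eq, mem_neg, neg_eq_iff_eq_neg]

-- The real infimum of a set unbounded below is `0`, so all large balls contribute `0` to `Ilow`.
theorem Ilow_nonneg_of_not_bddBelow {t : Set (Pt n)} (ht : Bornology.IsBounded t)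
    (htOm : t ⊆ Om) (htD : t ⊆ D) (hf : ¬BddBelow (f '' t)) (x : Pt n) : 0 ≤ Ilow D Om f x := by
  obtain ⟨r, hr, htr⟩ := ht.subset_ball_lt 0 x
  have ht_sub : t ⊆ {y | y ∈ Om ∧ ‖y - x‖ < r ∧ y ∈ D} := fun y hy =>
    ⟨htOm hy, mem_ball_iff_norm.1 (htr hy), htD hy⟩
  have hball : ¬BddBelow (f '' {y | y ∈ Om ∧ ‖y - x‖ < r ∧ y ∈ D}) :=
    mt (BddBelow.mono (image_mono ht_sub)) hf
  exact Real.sSup_nonneg' ⟨_, ⟨r, hr, rfl⟩, (Real.sInf_of_not_bddBelow hball).ge⟩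

theorem bddBelow_image_of_Ilow_le (hf : ∀ x ∈ Om, Ilow Om Om f x ≤ f x) {t : Set (Pt n)}
    (ht : Bornology.IsBounded t) (htOm : t ⊆ Om) : BddBelow (f '' t) := by
  by_contra hunbdd
  refine hunbdd ⟨0, ?_⟩
  rintro _ ⟨y, hy, rfl⟩
  exact (Ilow_nonneg_of_not_bddBelow ht htOm htOm hunbdd y).trans (hf y (htOm hy))

theorem lowerSemicontinuousOn_of_Ilow_eq (hf : ∀ x ∈ Om, Ilow Om Om f x = f x) :
    LowerSemicontinuousOn f Om := by
  intro x hx c hc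
  have hc_lt : c < Ilow Om Om f x := hc.trans_eq (hf x hx).symm
  obtain ⟨_, ⟨δ, hδ, rfl⟩, hcδ⟩ := exists_lt_of_lt_csSup (by exact ⟨_, 1, one_pos, rfl⟩) hc_lt
  have hbdd : BddBelow (f '' {y | y ∈ Om ∧ ‖y - x‖ < δ ∧ y ∈ Om}) :=
    bddBelow_image_of_Ilow_le (fun y hy => (hf y hy).le)
      (Metric.isBounded_ball.subset fun y hy => mem_ball_iff_norm.2 hy.2.1) fun y hy => hy.1
  filter_upwards [self_mem_nhdsWithin, mem_nhdsWithin_of_mem_nhds (Metric.ball_mem_nhds x hδ)]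
    with y hy hyx
  exact hcδ.trans_le (csInf_le hbdd ⟨y, ⟨hy, mem_ball_iff_norm.1 hyx, hy⟩, rfl⟩)

theorem upperSemicontinuousOn_of_Shigh_eq (hf : ∀ x ∈ Om, Shigh Om Om f x = f x) :
    UpperSemicontinuousOn f Om := by
  have hneg : LowerSemicontinuousOn (-f) Om :=
    lowerSemicontinuousOn_of_Ilow_eq fun x hx => by rw [Ilow_neg, hf x hx, Pi.neg_apply]
  simpa only [Function.comp_def, Pi.neg_apply, neg_neg] using
    continuous_neg.comp_lowerSemicontinuousOn_antitone hneg fun _ _ => neg_le_neg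

end Baire

section HContinuity

variable {n : ℕ} {D Om : Set (Pt n)} {u v p q u₁ v₁ u₂ v₂ : Pt n → ℝ}

theorem LocBddOn.of_le_of_le (hu : LocBddOn Om D u) (hv : LocBddOn Om D v)
    (hup : ∀ x ∈ Om ∩ D, u x ≤ p x) (hpv : ∀ x ∈ Om ∩ D, p x ≤ v x) : LocBddOn Om D p := by
  intro x hx
  obtain ⟨δ, hδ, M, hM⟩ := hu x hx
  obtain ⟨ε, hε, N, hN⟩ := hv x hx
  refine ⟨min δ ε, lt_min hδ hε, max M N, fun y hy hyx hyD => ?_⟩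
  calc |p y| ≤ max |u y| |v y| := abs_le_max_abs_abs (hup y ⟨hy, hyD⟩) (hpv y ⟨hy, hyD⟩)
    _ < max M N := max_lt_max (hM y hy (hyx.trans_le (min_le_left δ ε)) hyD)
      (hN y hy (hyx.trans_le (min_le_right δ ε)) hyD)

theorem HContPair.Ilow_eq_and_Shigh_eq (h : HContPair Om u v) (hup : ∀ x ∈ Om, u x ≤ p x)
    (hpq : ∀ x ∈ Om, p x ≤ q x) (hqv : ∀ x ∈ Om, q x ≤ v x) :
    ∀ x ∈ Om, Ilow Om Om p x = u x ∧ Shigh Om Om q x = v x := by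
  obtain ⟨⟨hu, hv, -⟩, hcont⟩ := h
  exact hcont p q
    (hu.of_le_of_le hv (fun x hx => hup x hx.1) fun x hx => (hpq x hx.1).trans (hqv x hx.1))
    (hu.of_le_of_le hv (fun x hx => (hup x hx.1).trans (hpq x hx.1)) fun x hx => hqv x hx.1)
    fun x hx => ⟨hup x hx, hpq x hx, hqv x hx⟩

theorem HContPair.le (h : HContPair Om u v) : ∀ x ∈ Om, u x ≤ v x :=
  h.1.2.2

theorem HContPair.sCont (h : HContPair Om u v) : SCont Om u v :=
  h.Ilow_eq_and_Shigh_eq (fun _ _ => le_rfl) h.le fun _ _ => le_rfl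

theorem SCont.lowerSemicontinuousOn (h : SCont Om u v) : LowerSemicontinuousOn u Om :=
  lowerSemicontinuousOn_of_Ilow_eq fun x hx => (h x hx).1

theorem SCont.upperSemicontinuousOn (h : SCont Om u v) : UpperSemicontinuousOn v Om :=
  upperSemicontinuousOn_of_Shigh_eq fun x hx => (h x hx).2

theorem HContPair.eq_of_le_of_le (h₁ : HContPair Om u₁ v₁) (h₂ : HContPair Om u₂ v₂)
    (h₁₂ : ∀ x ∈ Om, u₁ x ≤ v₂ x) (h₂₁ : ∀ x ∈ Om, u₂ x ≤ v₁ x) :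
    ∀ x ∈ Om, u₁ x = u₂ x ∧ v₁ x = v₂ x := by
  have hmeet : ∀ x ∈ Om, max (u₁ x) (u₂ x) ≤ min (v₁ x) (v₂ x) := fun x hx =>
    max_le (le_min (h₁.le x hx) (h₁₂ x hx)) (le_min (h₂₁ x hx) (h₂.le x hx))
  intro x hx
  obtain ⟨hu₁, hv₁⟩ := h₁.Ilow_eq_and_Shigh_eq
    (fun _ _ => le_max_left _ _) hmeet (fun _ _ => min_le_left _ _) x hx
  obtain ⟨hu₂, hv₂⟩ := h₂.Ilow_eq_and_Shigh_eq
    (fun _ _ => le_max_right _ _) hmeet (fun _ _ => min_le_right _ _) x hx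
  exact ⟨hu₁.symm.trans hu₂, hv₁.symm.trans hv₂⟩

end HContinuity

theorem stmt1_general {n : ℕ} (Om D : Set (Pt n)) (u₁ v₁ u₂ v₂ : Pt n → ℝ)
    (h₁ : HContPair Om u₁ v₁) (h₂ : HContPair Om u₂ v₂)
    (hD : D ⊆ Om) (hdense : Om ⊆ closure D)
    (hmeet : ∀ x ∈ D, u₁ x ≤ v₂ x ∧ u₂ x ≤ v₁ x) :
    ∀ x ∈ Om, u₁ x = u₂ x ∧ v₁ x = v₂ x := by
  have h₁₂ : ∀ x ∈ Om, u₁ x ≤ v₂ x :=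
    le_of_lowerSemicontinuousOn_of_upperSemicontinuousOn h₁.sCont.lowerSemicontinuousOn
      h₂.sCont.upperSemicontinuousOn hD hdense fun x hx => (hmeet x hx).1
  have h₂₁ : ∀ x ∈ Om, u₂ x ≤ v₁ x :=
    le_of_lowerSemicontinuousOn_of_upperSemicontinuousOn h₂.sCont.lowerSemicontinuousOn
      h₁.sCont.upperSemicontinuousOn hD hdense fun x hx => (hmeet x hx).2
  exact h₁.eq_of_le_of_le h₂ h₁₂ h₂₁

theorem stmt1 {n : ℕ} (Om D : Set (Pt n)) (u₁ v₁ u₂ v₂ : Pt n → ℝ)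
    (h₁ : HContPair Om u₁ v₁) (h₂ : HContPair Om u₂ v₂)
    (hD : D ⊆ Om) (hdense : Om ⊆ closure D)
    (heq : ∀ x ∈ D, u₁ x = u₂ x ∧ v₁ x = v₂ x) :
    ∀ x ∈ Om, u₁ x = u₂ x ∧ v₁ x = v₂ x :=
  stmt1_general Om D u₁ v₁ u₂ v₂ h₁ h₂ hD hdense fun x hx =>
    ⟨(heq x hx).1.trans_le (h₂.le x (hD hx)), (heq x hx).1.symm.trans_le (h₁.le x (hD hx))⟩
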